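/- Let n ≥ 2 and work at z = 1 on the full state space H = ⊕_{k≥0} H_k, i.e. the complex vector space with basis all configurations m : ℤ/nℤ → ℕ; let φ_i*(m) = m + δ_i and φ_i(m) = m − δ_i if m_i ≥ 1, φ_i(m) = 0 otherwise. Then for every i ∈ ℤ/nℤ and every 1 ≤ r ≤ n−1 one has φ_i ∘ e_r(𝒜) ∘ φ_i* = e_r(𝒜) as endomorphisms of H. In particular, for all k ≥ 1, all j ∈ ℤ/nℤ and all μ, ν ∈ 𝔓_{≤n−1,k}: ⟨φ_j*(m(ν)), e_r(𝒜)·φ_j*(m(μ))⟩ = ⟨m(ν), e_r(𝒜)·m(μ)⟩ (the level-(k+1) fusion coefficient of a column (1^r) with both weights shifted by a creation operator equals the corresponding level-k coefficient). -/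

import Mathlib

noncomputable section

open scoped BigOperators

/-- `𝔓_{≤r,c}`: partitions with at most `r` parts, each part at most `c`. -/
abbrev PartBox (r c : ℕ) :=
  {f : Fin r → Fin (c + 1) // ∀ i j : Fin r, i ≤ j → (f j : ℕ) ≤ (f i : ℕ)}

/-- The parts of a partition, as natural numbers. -/
def partVal {r c : ℕ} (σ : PartBox r c) (i : Fin r) : ℕ := (σ.1 i : ℕ)

/-- A tuple of parts, padded by zeros. -/
def padded {r : ℕ} (f : Fin r → ℕ) (t : ℕ) : ℕ := if h : t < r then f ⟨t, h⟩ else 0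

/-- The full state space `H = ⊕_k H_k`: the complex vector space with basis all
configurations `m : ℤ/nℤ → ℕ`. -/
abbrev StateSpace (n : ℕ) := (ZMod n → ℕ) →₀ ℂ

/-- The creation operator `φ_i*`. -/
def creOp (n : ℕ) (i : ZMod n) : Module.End ℂ (StateSpace n) :=
  Finsupp.lift (StateSpace n) ℂ (ZMod n → ℕ) fun m =>
    Finsupp.single (fun c => m c + (Pi.single i 1 : ZMod n → ℕ) c) 1

/-- The annihilation operator `φ_i`. -/
def annOp (n : ℕ) (i : ZMod n) : Module.End ℂ (StateSpace n) :=
  Finsupp.lift (StateSpace n) ℂ (ZMod n → ℕ) fun m =>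
    if m i = 0 then 0 else Finsupp.single (fun c => m c - (Pi.single i 1 : ZMod n → ℕ) c) 1

/-- The hopping operator `a_i = φ_{i+1}* φ_i` at `z = 1`. -/
def hopOp (n : ℕ) (i : ZMod n) : Module.End ℂ (StateSpace n) :=
  Finsupp.lift (StateSpace n) ℂ (ZMod n → ℕ) fun m =>
    if m i = 0 then 0
    else
      Finsupp.single
        (fun c => m c - (Pi.single i 1 : ZMod n → ℕ) c + (Pi.single (i + 1) 1 : ZMod n → ℕ) c) 1

/-- A canonical "gap" of a proper subset `I ⊊ ℤ/nℤ`. -/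
def zgap {n : ℕ} [NeZero n] (I : Finset (ZMod n)) : ZMod n :=
  if h : ((Finset.univ \ I).image ZMod.val).Nonempty then
    ((((Finset.univ \ I).image ZMod.val).min' h : ℕ) : ZMod n)
  else 0

/-- The cyclically ordered product `∏_{i ∈ I} a_i` in which `a_{i+1}` stands to the left
of `a_i` whenever `i, i+1 ∈ I`. -/
def cycProdDesc {n : ℕ} [NeZero n] {A : Type*} [Monoid A] (a : ZMod n → A)
    (I : Finset (ZMod n)) : A :=
  ((List.range n).map fun t =>
    if zgap I - 1 - (t : ZMod n) ∈ I then a (zgap I - 1 - (t : ZMod n)) else 1).prod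

/-- The noncommutative elementary symmetric polynomial `e_r(𝒜)` in the hopping operators. -/
def eFull (n : ℕ) [NeZero n] (r : ℕ) : Module.End ℂ (StateSpace n) :=
  ∑ I ∈ Finset.powersetCard r (Finset.univ : Finset (ZMod n)), cycProdDesc (hopOp n) I

/-- The Hermitian inner product on `H` making the configuration basis orthonormal. -/
def pairH {n : ℕ} (f g : StateSpace n) : ℂ :=
  g.sum fun m c => (starRingEnd ℂ) (f m) * c

/-- The configuration `m(λ)` of a partition `λ ∈ 𝔓_{≤ n-1,k}`. -/
def cfgOf (n k : ℕ) (σ : PartBox (n - 1) k) (c : ZMod n) : ℕ :=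
  if c.val = 0 then k - padded (partVal σ) 0
  else padded (partVal σ) (c.val - 1) - padded (partVal σ) (c.val)

section CyclicProduct

variable {M : Type*} [Monoid M] {p q : M}

theorem mul_prod_map_range_mul_eq_of_commute (hpq : p * q = 1) {k n : ℕ} (hkn : k ≤ n)
    {F : ℕ → M} (hp : ∀ t < k, Commute p (F t)) (hq : ∀ t, k ≤ t → t < n → Commute (F t) q) :
    p * ((List.range n).map F).prod * q = ((List.range n).map F).prod := by
  obtain ⟨d, rfl⟩ := exists_add_of_le hkn
  rw [List.range_add, List.map_append, List.map_map, List.prod_append]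
  have hleft : Commute p ((List.range k).map F).prod :=
    Commute.list_prod_right _ _ <| List.forall_mem_map.2 fun t ht => hp t (List.mem_range.1 ht)
  have hright : Commute ((List.range d).map (F ∘ (k + ·))).prod q :=
    Commute.list_prod_left _ _ <| List.forall_mem_map.2 fun t ht =>
      hq (k + t) (k.le_add_right t) (Nat.add_lt_add_left (List.mem_range.1 ht) k)
  rw [← mul_assoc, hleft.eq, mul_assoc, hright.eq, mul_assoc, ← mul_assoc p, hpq, one_mul]

variable {n : ℕ} [NeZero n]

theorem zgap_notMem {I : Finset (ZMod n)} (hI : I ≠ Finset.univ) : zgap I ∉ I := by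
  have hne : ((Finset.univ \ I).image ZMod.val).Nonempty := by
    simpa [Finset.sdiff_nonempty, Finset.univ_subset_iff] using hI
  obtain ⟨x, hx, hxval⟩ := Finset.mem_image.1 (Finset.min'_mem _ hne)
  rw [zgap, dif_pos hne, ← hxval, ZMod.natCast_zmod_val]
  exact (Finset.mem_sdiff.1 hx).2

/- In `cycProdDesc` the variable `t` ranges over `ZMod n`: `List.range n` is coerced entrywise, as a
monadic bind. -/
theorem cycProdDesc_eq_prod_map_range (a : ZMod n → M) (I : Finset (ZMod n)) :
    cycProdDesc a I = ((List.range n).map fun t : ℕ =>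
      if zgap I - 1 - (t : ZMod n) ∈ I then a (zgap I - 1 - (t : ZMod n)) else 1).prod := by
  simp only [cycProdDesc, List.bind_eq_flatMap, List.pure_def, ← List.map_eq_flatMap,
    List.map_map, Function.comp_def]

/- Cut the product just before the position `(zgap I - i).val` of the factor `a (i - 1)`, that is,
just after the factor `a i`: `p` passes through the left part and `q` through the right part. If
`i` is the gap itself, the cut is at `0`, and the factor `a i`, which would come last, is absent. -/
theorem mul_cycProdDesc_mul_eq {a : ZMod n → M} {i : ZMod n} (hpq : p * q = 1)
    (hp : ∀ j, j ≠ i - 1 → Commute p (a j)) (hq : ∀ j, j ≠ i → Commute (a j) q)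
    {I : Finset (ZMod n)} (hI : I ≠ Finset.univ) :
    p * cycProdDesc a I * q = cycProdDesc a I := by
  rw [cycProdDesc_eq_prod_map_range]
  set g := zgap I
  refine mul_prod_map_range_mul_eq_of_commute hpq (ZMod.val_lt (g - i)).le
    (fun t ht => ?_) (fun t hkt htn => ?_)
  · split_ifs
    · refine hp _ fun h => ht.ne ?_
      rw [show g - i = t by linear_combination h, ZMod.val_cast_of_lt]
      exact ht.trans (ZMod.val_lt _)
    · exact Commute.one_right p
  · split_ifs with hmem
    · refine hq _ fun h => ?_
      have hgi : g - i = ((t + 1 : ℕ) : ZMod n) := by push_cast; linear_combination h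
      obtain htn | rfl : t + 1 < n ∨ n = t + 1 := by omega
      · rw [hgi, ZMod.val_cast_of_lt htn] at hkt
        exact Nat.not_succ_le_self t hkt
      · rw [ZMod.natCast_self, sub_eq_zero] at hgi
        exact zgap_notMem hI (by rwa [h, ← hgi] at hmem)
    · exact Commute.one_left q

end CyclicProduct

theorem exists_eq_add_single {ι : Type*} [DecidableEq ι] {m : ι → ℕ} {i : ι} (h : m i ≠ 0) :
    ∃ p : ι → ℕ, m = p + Pi.single i 1 := by
  refine ⟨m - Pi.single i 1, (tsub_add_cancel_of_le fun j => ?_).symm⟩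
  rcases eq_or_ne j i with rfl | hj
  · simpa [Nat.one_le_iff_ne_zero] using h
  · simp [hj]

section PhaseOperators

variable {n : ℕ}

theorem creOp_single (i : ZMod n) (m : ZMod n → ℕ) (c : ℂ) :
    creOp n i (Finsupp.single m c) = Finsupp.single (m + Pi.single i 1) c := by
  simp [creOp, Pi.add_def]

theorem annOp_single_of_eq_zero {i : ZMod n} {m : ZMod n → ℕ} (h : m i = 0) (c : ℂ) :
    annOp n i (Finsupp.single m c) = 0 := by
  simp [annOp, h]

theorem annOp_single_add_single (i : ZMod n) (m : ZMod n → ℕ) (c : ℂ) :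
    annOp n i (Finsupp.single (m + Pi.single i 1) c) = Finsupp.single m c := by
  simp [annOp]

theorem annOp_mul_creOp_self (i : ZMod n) : annOp n i * creOp n i = 1 := by
  ext m : 2
  simp [creOp_single, annOp_single_add_single]

theorem commute_creOp_creOp (i j : ZMod n) : Commute (creOp n i) (creOp n j) := by
  refine Finsupp.lhom_ext fun m c => ?_
  simp [creOp_single, add_right_comm]

theorem commute_annOp_creOp {i j : ZMod n} (h : i ≠ j) :
    Commute (annOp n i) (creOp n j) := by
  refine Finsupp.lhom_ext fun m c => ?_
  simp only [Module.End.mul_apply, creOp_single]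
  by_cases hm : m i = 0
  · have hm' : (m + Pi.single j 1 : ZMod n → ℕ) i = 0 := by simp [hm, h]
    rw [annOp_single_of_eq_zero hm, annOp_single_of_eq_zero hm', map_zero]
  · obtain ⟨p, rfl⟩ := exists_eq_add_single hm
    rw [add_right_comm, annOp_single_add_single, annOp_single_add_single, creOp_single]

theorem annOp_apply (i : ZMod n) (f : StateSpace n) (m : ZMod n → ℕ) :
    annOp n i f m = f (m + Pi.single i 1) := by
  classical
  induction f using Finsupp.induction_linear with
  | zero => simp
  | add f g hf hg => simp [hf, hg]
  | single p c =>
    by_cases hp : p i = 0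
    · have hne : p ≠ m + Pi.single i 1 := by rintro rfl; simp at hp
      rw [annOp_single_of_eq_zero hp, Finsupp.single_eq_of_ne' hne, Finsupp.zero_apply]
    · obtain ⟨p, rfl⟩ := exists_eq_add_single hp
      simp only [annOp_single_add_single, Finsupp.single_apply, add_left_inj]

theorem commute_annOp_annOp (i j : ZMod n) : Commute (annOp n i) (annOp n j) := by
  ext1 f
  ext m
  simp [annOp_apply, add_right_comm]

theorem hopOp_eq_creOp_mul_annOp (i : ZMod n) : hopOp n i = creOp n (i + 1) * annOp n i := by
  refine Finsupp.lhom_ext fun m c => ?_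
  by_cases hm : m i = 0
  · simp [hopOp, hm, annOp_single_of_eq_zero]
  · obtain ⟨p, rfl⟩ := exists_eq_add_single hm
    rw [Module.End.mul_apply, annOp_single_add_single, creOp_single]
    simp [hopOp, Pi.add_def]

theorem commute_annOp_hopOp {i j : ZMod n} (h : j ≠ i - 1) :
    Commute (annOp n i) (hopOp n j) := by
  rw [hopOp_eq_creOp_mul_annOp]
  exact (commute_annOp_creOp fun hij => h (eq_sub_of_add_eq hij.symm)).mul_right
    (commute_annOp_annOp i j)

theorem commute_hopOp_creOp {i j : ZMod n} (h : j ≠ i) :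
    Commute (hopOp n j) (creOp n i) := by
  rw [hopOp_eq_creOp_mul_annOp]
  exact (commute_creOp_creOp _ _).mul_left (commute_annOp_creOp h)

theorem annOp_mul_eFull_mul_creOp [NeZero n] {r : ℕ} (hr : r < n) (i : ZMod n) :
    annOp n i * eFull n r * creOp n i = eFull n r := by
  rw [eFull, Finset.mul_sum, Finset.sum_mul]
  refine Finset.sum_congr rfl fun I hI => mul_cycProdDesc_mul_eq (annOp_mul_creOp_self i)
    (fun _ => commute_annOp_hopOp) (fun _ => commute_hopOp_creOp) ?_
  rintro rfl
  have hcard := (Finset.mem_powersetCard.1 hI).2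
  rw [Finset.card_univ, ZMod.card] at hcard
  exact hr.ne' hcard

end PhaseOperators

section Pairing

variable {n : ℕ}

theorem pairH_add_left (f₁ f₂ g : StateSpace n) :
    pairH (f₁ + f₂) g = pairH f₁ g + pairH f₂ g := by
  simp [pairH, add_mul, Finsupp.sum_add]

theorem pairH_single_left (m : ZMod n → ℕ) (c : ℂ) (g : StateSpace n) :
    pairH (Finsupp.single m c) g = starRingEnd ℂ c * g m := by
  classical
  simp +contextual [pairH, Finsupp.single_apply, Finsupp.sum, apply_ite]

theorem pairH_creOp_left (i : ZMod n) (f g : StateSpace n) :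
    pairH (creOp n i f) g = pairH f (annOp n i g) := by
  induction f using Finsupp.induction_linear with
  | zero => simp [pairH]
  | add f₁ f₂ h₁ h₂ => rw [map_add, pairH_add_left, pairH_add_left, h₁, h₂]
  | single m c => rw [creOp_single, pairH_single_left, pairH_single_left, annOp_apply]

end Pairing

theorem creation_conjugation_invariance_general {n : ℕ} [NeZero n] {r : ℕ} (hr : r < n)
    (i : ZMod n) :
    annOp n i * eFull n r * creOp n i = eFull n r ∧
      ∀ f g : StateSpace n,
        pairH (creOp n i f) (eFull n r (creOp n i g)) = pairH f (eFull n r g) := by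
  have hconj := annOp_mul_eFull_mul_creOp hr i
  refine ⟨hconj, fun f g => ?_⟩
  rw [pairH_creOp_left, ← Module.End.mul_apply, ← Module.End.mul_apply, hconj]

/-- At `z = 1`, `φ_i ∘ e_r(𝒜) ∘ φ_i* = e_r(𝒜)` on the full state space
`H`, for every site `i` and every `1 ≤ r ≤ n-1`.  In particular the level-`(k+1)` fusion
coefficients of a column with both weights shifted by a creation operator equal the
corresponding level-`k` coefficients:
`⟨φ_j* m(ν), e_r(𝒜) φ_j* m(μ)⟩ = ⟨m(ν), e_r(𝒜) m(μ)⟩`. -/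
theorem creation_conjugation_invariance (n : ℕ) [NeZero n] (hn : 2 ≤ n) :
    (∀ (i : ZMod n) (r : ℕ), 1 ≤ r → r ≤ n - 1 →
        annOp n i * eFull n r * creOp n i = eFull n r) ∧
    (∀ (k : ℕ), 1 ≤ k → ∀ (j : ZMod n) (mu nu : PartBox (n - 1) k) (r : ℕ),
        1 ≤ r → r ≤ n - 1 →
        pairH (creOp n j (Finsupp.single (cfgOf n k nu) 1))
            (eFull n r (creOp n j (Finsupp.single (cfgOf n k mu) 1))) =
          pairH (Finsupp.single (cfgOf n k nu) 1)
            (eFull n r (Finsupp.single (cfgOf n k mu) 1))) :=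
  ⟨fun i _ _ hr => (creation_conjugation_invariance_general (by omega) i).1,
    fun _ _ j _ _ _ _ hr => (creation_conjugation_invariance_general (by omega) j).2 _ _⟩
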